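/- Let k ≥ 1 and let φ = ∃X.∀Y.ψ be a quantified Boolean formula where X = {x₁,…,xₙ} and Y = {y₁,…,y_m} are disjoint sets of variables and ψ = δ₁ ∨ … ∨ δ_u is a 3DNF formula in which every variable of Y occurs only positively, with δ_ℓ = l^ℓ₁ ∧ l^ℓ₂ ∧ l^ℓ₃ for each 1 ≤ ℓ ≤ u. Let σ map literals to atoms by σ(x_i) = x_i, σ(¬x_i) = v_i, σ(y_i) = y_i, and let P be the disjunctive logic program over the atoms X ∪ Y ∪ {v₁,…,vₙ} ∪ {w} ∪ {y^j_i : 1 ≤ j ≤ k, 1 ≤ i ≤ m} consisting of the rules: (x_i ← not v_i) and (v_i ← not x_i) for 1 ≤ i ≤ n; (y^j_1 ∨ … ∨ y^j_m ←) for 1 ≤ j ≤ k; (y_i ← y^j_i) and (y^j_i ← w) for 1 ≤ i ≤ m and 1 ≤ j ≤ k; (w ← y^j_i, y^{j′}_i) for 1 ≤ i ≤ m and 1 ≤ j < j′ ≤ k; (w ← σ(l^ℓ₁), σ(l^ℓ₂), σ(l^ℓ₃)) for 1 ≤ ℓ ≤ u; and (w ← not w). Then the disjunctive rules of P are exactly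 the k rules (y^j_1 ∨ … ∨ y^j_m ←), and the following are equivalent: (1) there exists a truth assignment α : X → Bool such that for every truth assignment β : Y → Bool of weight k the assignment α ∪ β satisfies ψ; (2) P has an answer set. -/

import Mathlib

/-- A rule of a disjunctive logic program: `head` is the (disjunctive) head,
`pos` the positive body atoms and `neg` the (default-negated) negative body atoms. -/
structure Rule (A : Type) where
  head : Finset A
  pos : Finset A
  neg : Finset A

namespace Rule
variable {A : Type}

/-- A rule is normal if its head contains at most one atom. -/
def isNormal (r : Rule A) : Prop := r.head.card ≤ 1

/-- A rule is disjunctive if its head contains more than one atom. -/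
def isDisjunctive (r : Rule A) : Prop := 1 < r.head.card

/-- A rule is negation-free if its negative body is empty. -/
def negFree (r : Rule A) : Prop := r.neg = ∅

/-- A set `M` of atoms satisfies a (negation-free) rule if, whenever all atoms of the
positive body belong to `M`, some head atom belongs to `M`. -/
def satisfiedBy (r : Rule A) (M : Set A) : Prop :=
  (∀ b ∈ r.pos, b ∈ M) → ∃ a ∈ r.head, a ∈ M

end Rule

/-- The set of atoms occurring in a program. -/
def progAtoms {A : Type} (P : Set (Rule A)) : Set A :=
  {a | ∃ r ∈ P, a ∈ r.head ∨ a ∈ r.pos ∨ a ∈ r.neg}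

/-- `M` is a model of the (negation-free) program `P`. -/
def isModel {A : Type} (P : Set (Rule A)) (M : Set A) : Prop :=
  ∀ r ∈ P, r.satisfiedBy M

/-- `M` is a minimal model of the (negation-free) program `P`. -/
def isMinimalModel {A : Type} (P : Set (Rule A)) (M : Set A) : Prop :=
  isModel P M ∧ ∀ M' : Set A, M' ⊂ M → ¬ isModel P M'

/-- The GL reduct of `P` with respect to `M`: remove every rule whose negative body
meets `M`, and delete the negative bodies of the remaining rules. -/
def reduct {A : Type} (P : Set (Rule A)) (M : Set A) : Set (Rule A) :=
  {r' | ∃ r ∈ P, (∀ c ∈ r.neg, c ∉ M) ∧ r' = ⟨r.head, r.pos, ∅⟩}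

/-- An answer set of `P` is a set `M ⊆ Atoms(P)` that is a subset-minimal model
of the reduct `P^M`. -/
def isAnswerSet {A : Type} (P : Set (Rule A)) (M : Set A) : Prop :=
  M ⊆ progAtoms P ∧ isMinimalModel (reduct P M) M

/-- The compulsory atoms `Comp(P)`: the smallest set of atoms such that (i) if
`(w ← not w)` is a rule of `P` then `w` is compulsory, and (ii) if `(b ← a₁,…,aₙ)`
is a normal negation-free rule of `P` all of whose body atoms are compulsory,
then `b` is compulsory. -/
inductive Compulsory {A : Type} (P : Set (Rule A)) : A → Prop
  | loop (w : A) : (⟨{w}, ∅, {w}⟩ : Rule A) ∈ P → Compulsory P w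
  | rule (r : Rule A) (b : A) : r ∈ P → r.head = {b} → r.neg = ∅ →
      (∀ a ∈ r.pos, Compulsory P a) → Compulsory P b

/-- The contingent atoms `Cont(P) = Atoms(P) ∖ Comp(P)`. -/
def ContingentAtoms {A : Type} (P : Set (Rule A)) : Set A :=
  progAtoms P \ {a | Compulsory P a}

/-- A rule of `P` is contingent if its head contains a contingent atom. -/
def isContingentRule {A : Type} (P : Set (Rule A)) (r : Rule A) : Prop :=
  r ∈ P ∧ ∃ a ∈ r.head, a ∈ ContingentAtoms P

/-- The weight of a truth assignment: the number of variables it maps to true. -/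
def weight {X : Type} [Fintype X] (α : X → Bool) : ℕ :=
  (Finset.univ.filter fun x => α x = true).card

/-- The atoms of the constructed program: the variables `x₁,…,xₙ` and `y₁,…,y_m` of the
quantified Boolean formula, the fresh atoms `v₁,…,vₙ`, `w`, and `y^j_i` for
`1 ≤ j ≤ k`, `1 ≤ i ≤ m`. -/
inductive Atom2 (n m k : ℕ) : Type
  | x (i : Fin n)
  | y (i : Fin m)
  | v (i : Fin n)
  | w
  | yj (j : Fin k) (i : Fin m)
deriving DecidableEq

/-- The mapping `σ` from literals over `X ∪ Y` to atoms:
`σ(x_i) = x_i`, `σ(¬x_i) = v_i`, `σ(y_i) = y_i` (variables of `Y` occur only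
positively in `ψ`). -/
def sigma2 {n m : ℕ} (k : ℕ) (l : (Fin n ⊕ Fin m) × Bool) : Atom2 n m k :=
  match l with
  | (Sum.inl i, true) => Atom2.x i
  | (Sum.inl i, false) => Atom2.v i
  | (Sum.inr i, _) => Atom2.y i

/-- The disjunctive "guessing" rule `(y^j_1 ∨ … ∨ y^j_m ←)`. -/
def guessRule2 (n m : ℕ) {k : ℕ} (j : Fin k) : Rule (Atom2 n m k) :=
  ⟨Finset.univ.image (Atom2.yj j), ∅, ∅⟩

/-- The disjunctive logic program `P` constructed from the 3DNF formula
`ψ = δ₁ ∨ … ∨ δ_u` (given by the literal table `δ`). -/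
def prog2 (k : ℕ) {n m u : ℕ} (δ : Fin u → Fin 3 → (Fin n ⊕ Fin m) × Bool) :
    Set (Rule (Atom2 n m k)) :=
  {r |
    (∃ i : Fin n, r = ⟨{Atom2.x i}, ∅, {Atom2.v i}⟩)
    ∨ (∃ i : Fin n, r = ⟨{Atom2.v i}, ∅, {Atom2.x i}⟩)
    ∨ (∃ j : Fin k, r = guessRule2 n m j)
    ∨ (∃ (i : Fin m) (j : Fin k), r = ⟨{Atom2.y i}, {Atom2.yj j i}, ∅⟩)
    ∨ (∃ (i : Fin m) (j : Fin k), r = ⟨{Atom2.yj j i}, {Atom2.w}, ∅⟩)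
    ∨ (∃ (i : Fin m) (j j' : Fin k), j < j' ∧
        r = ⟨{Atom2.w}, {Atom2.yj j i, Atom2.yj j' i}, ∅⟩)
    ∨ (∃ l : Fin u,
        r = ⟨{Atom2.w}, {sigma2 k (δ l 0), sigma2 k (δ l 1), sigma2 k (δ l 2)}, ∅⟩)
    ∨ r = ⟨{Atom2.w}, ∅, {Atom2.w}⟩}

/-!
The rule `w ← not w` forces `w` into every answer set, and `w` in turn forces all atoms over `Y`.
An answer set is therefore determined by an assignment `α` to `X`: it is the saturated set of `α`.
The proper subsets of a saturated set that could still be models of the reduct omit `w`; then the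
`k` guessing rules pick pairwise distinct variables of `Y`, that is, the set of true variables of
an assignment of weight `k`. As the variables of `Y` occur only positively, the set of atoms
belonging to `α` and such a choice is closed under the term rules precisely when no term of `ψ`
holds. So the saturated set of `α` is minimal if and only if every choice satisfies `ψ`.
-/

section AnswerSets

variable {A : Type} {P : Set (Rule A)} {M N : Set A}

theorem isMinimalModel_iff_minimal : isMinimalModel P M ↔ Minimal (isModel P) M :=
  Set.minimal_iff_forall_ssubset.symm

theorem isModel_reduct_iff :
    isModel (reduct P M) N ↔ ∀ r ∈ P, (∀ c ∈ r.neg, c ∉ M) → r.satisfiedBy N :=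
  ⟨fun h r hr hneg => h ⟨r.head, r.pos, ∅⟩ ⟨r, hr, hneg, rfl⟩,
    fun h _ ⟨r, hr, hneg, hr'⟩ => hr' ▸ h r hr hneg⟩

end AnswerSets

section Assignments

/-- The truth assignment `τ` satisfies the DNF formula whose terms are the rows of the literal
table `δ`; a literal is a variable paired with the truth value that makes the literal true. -/
def SatisfiesDNF {ι κ V : Type*} (δ : ι → κ → V × Bool) (τ : V → Bool) : Prop :=
  ∃ l, ∀ d, τ (δ l d).1 = (δ l d).2

/-- The truth assignment that makes true exactly the variables in the range of `f`. -/
def rangeAssignment {ι V : Type*} [Fintype ι] [DecidableEq V] (f : ι → V) (x : V) : Bool :=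
  decide (∃ j, f j = x)

theorem rangeAssignment_eq_true {ι V : Type*} [Fintype ι] [DecidableEq V] {f : ι → V} {x : V} :
    rangeAssignment f x = true ↔ ∃ j, f j = x :=
  decide_eq_true_iff

theorem weight_rangeAssignment {ι V : Type} [Fintype ι] [Fintype V] [DecidableEq V]
    (f : ι ↪ V) : weight (rangeAssignment f) = Fintype.card ι := by
  have hrange : (Finset.univ.filter fun x => rangeAssignment f x = true) = Finset.univ.map f := by
    ext x
    simp [rangeAssignment_eq_true]
  rw [weight, hrange, Finset.card_map, Finset.card_univ]

theorem exists_rangeAssignment_eq {V : Type} [Fintype V] [DecidableEq V] (β : V → Bool) :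
    ∃ f : Fin (weight β) ↪ V, rangeAssignment f = β := by
  let e : Fin (weight β) ≃ {x // x ∈ Finset.univ.filter fun x => β x = true} :=
    (Finset.equivFin _).symm
  refine ⟨e.toEmbedding.trans (Function.Embedding.subtype _), funext fun x => ?_⟩
  rw [Bool.eq_iff_iff, rangeAssignment_eq_true]
  constructor
  · rintro ⟨j, rfl⟩
    exact (Finset.mem_filter.mp (e j).2).2
  · intro hx
    exact ⟨e.symm ⟨x, by simpa using hx⟩, by simp⟩

theorem forall_weight_eq_iff {V : Type} [Fintype V] [DecidableEq V] {k : ℕ}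
    {p : (V → Bool) → Prop} :
    (∀ β, weight β = k → p β) ↔ ∀ f : Fin k ↪ V, p (rangeAssignment f) := by
  constructor
  · intro h f
    exact h _ ((weight_rangeAssignment f).trans (Fintype.card_fin k))
  · rintro h β rfl
    obtain ⟨f, hf⟩ := exists_rangeAssignment_eq β
    exact hf ▸ h f

end Assignments

section DisjunctiveRules

variable {n m k u : ℕ}

theorem card_head_guessRule2 (j : Fin k) : (guessRule2 n m j).head.card = m := by
  have hinj : Function.Injective (Atom2.yj (n := n) (m := m) j) := fun _ _ h => by injection h
  rw [guessRule2, Finset.card_image_of_injective _ hinj, Finset.card_fin]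

theorem guessRule2_injective (hm : 0 < m) : Function.Injective (guessRule2 n m (k := k)) := by
  intro j j' h
  have hmem : Atom2.yj j ⟨0, hm⟩ ∈ (guessRule2 n m j').head := by
    rw [← h]
    simp [guessRule2]
  simpa [guessRule2, eq_comm] using hmem

theorem setOf_isDisjunctive_prog2 (hm : 2 ≤ m)
    (δ : Fin u → Fin 3 → (Fin n ⊕ Fin m) × Bool) :
    {r : Rule (Atom2 n m k) | r ∈ prog2 k δ ∧ r.isDisjunctive}
      = Set.range (guessRule2 n m (k := k)) := by
  ext r
  constructor
  · rintro ⟨⟨i, rfl⟩ | ⟨i, rfl⟩ | ⟨j, rfl⟩ | ⟨i, j, rfl⟩ | ⟨i, j, rfl⟩ | ⟨i, j, j', -, rfl⟩ |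
      ⟨l, rfl⟩ | rfl, hr⟩
    case inr.inr.inl => exact ⟨j, rfl⟩
    all_goals exact absurd hr (by simp [Rule.isDisjunctive])
  · rintro ⟨j, rfl⟩
    exact ⟨.inr <| .inr <| .inl ⟨j, rfl⟩, hm.trans_eq (card_head_guessRule2 j).symm⟩

end DisjunctiveRules

section Reduction

variable {n m k u : ℕ} {δ : Fin u → Fin 3 → (Fin n ⊕ Fin m) × Bool} {M N : Set (Atom2 n m k)}
  {α : Fin n → Bool}

/-- `N` is a model of the GL reduct of `prog2 k δ` with respect to `M`, spelled out as one closure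
condition per family of rules. The collision rules are symmetrized from `j < j'` to `j ≠ j'`. -/
structure IsReductModel (δ : Fin u → Fin 3 → (Fin n ⊕ Fin m) × Bool)
    (M N : Set (Atom2 n m k)) : Prop where
  x_mem : ∀ i, .v i ∉ M → .x i ∈ N
  v_mem : ∀ i, .x i ∉ M → .v i ∈ N
  exists_yj_mem : ∀ j, ∃ i, .yj j i ∈ N
  y_mem : ∀ i j, .yj j i ∈ N → .y i ∈ N
  yj_mem : ∀ i j, .w ∈ N → .yj j i ∈ N
  w_mem_of_collision : ∀ i j j', j ≠ j' → .yj j i ∈ N → .yj j' i ∈ N → .w ∈ N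
  w_mem_of_term : ∀ l, (∀ d, sigma2 k (δ l d) ∈ N) → .w ∈ N
  w_mem_of_notMem : .w ∉ M → .w ∈ N

theorem forall_mem_prog2_iff {p : Rule (Atom2 n m k) → Prop} :
    (∀ r ∈ prog2 k δ, p r) ↔
      (∀ i, p ⟨{.x i}, ∅, {.v i}⟩) ∧
      (∀ i, p ⟨{.v i}, ∅, {.x i}⟩) ∧
      (∀ j, p (guessRule2 n m j)) ∧
      (∀ i j, p ⟨{.y i}, {.yj j i}, ∅⟩) ∧
      (∀ i j, p ⟨{.yj j i}, {.w}, ∅⟩) ∧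
      (∀ i j j', j < j' → p ⟨{.w}, {.yj j i, .yj j' i}, ∅⟩) ∧
      (∀ l, p ⟨{.w}, {sigma2 k (δ l 0), sigma2 k (δ l 1), sigma2 k (δ l 2)}, ∅⟩) ∧
      p ⟨{.w}, ∅, {.w}⟩ := by
  simp only [prog2, Set.mem_ofPred_eq]
  grind

theorem isModel_reduct_prog2_iff : isModel (reduct (prog2 k δ) M) N ↔ IsReductModel δ M N := by
  rw [isModel_reduct_iff, forall_mem_prog2_iff]
  simp only [guessRule2, Rule.satisfiedBy, Finset.mem_singleton, Finset.mem_insert,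
    Finset.mem_image, Finset.mem_univ, Finset.notMem_empty, IsEmpty.forall_iff, implies_true,
    forall_const, forall_eq, forall_eq_or_imp, exists_eq_left, exists_exists_eq_and, true_and,
    and_imp]
  constructor
  · rintro ⟨hx, hv, hguess, hy, hyj, hcollision, hterm, hw⟩
    exact
      { x_mem := hx
        v_mem := hv
        exists_yj_mem := hguess
        y_mem := hy
        yj_mem := hyj
        w_mem_of_collision := fun i j j' hne hj hj' => hne.lt_or_gt.elim
          (fun hlt => hcollision i j j' hlt hj hj') (fun hgt => hcollision i j' j hgt hj' hj)
        w_mem_of_term := fun l hl => hterm l (hl 0) (hl 1) (hl 2)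
        w_mem_of_notMem := hw }
  · intro h
    exact ⟨h.x_mem, h.v_mem, h.exists_yj_mem, h.y_mem, h.yj_mem,
      fun i j j' hlt => h.w_mem_of_collision i j j' hlt.ne,
      fun l h₀ h₁ h₂ => h.w_mem_of_term l (by simp [Fin.forall_fin_succ, h₀, h₁, h₂]),
      h.w_mem_of_notMem⟩

theorem progAtoms_prog2 (hk : 0 < k) : progAtoms (prog2 k δ) = Set.univ := by
  refine Set.eq_univ_of_forall fun a => ?_
  cases a with
  | x i => exact ⟨⟨{.x i}, ∅, {.v i}⟩, by simp [prog2], by simp⟩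
  | v i => exact ⟨⟨{.v i}, ∅, {.x i}⟩, by simp [prog2], by simp⟩
  | y i => exact ⟨⟨{.y i}, {.yj ⟨0, hk⟩ i}, ∅⟩, by simp [prog2], by simp⟩
  | yj j i => exact ⟨⟨{.y i}, {.yj j i}, ∅⟩, by simp [prog2], by simp⟩
  | w => exact ⟨⟨{.w}, ∅, {.w}⟩, by simp [prog2], by simp⟩

theorem isAnswerSet_prog2_iff (hk : 0 < k) :
    isAnswerSet (prog2 k δ) M ↔ Minimal (IsReductModel δ M) M := by
  have hmodel : isModel (reduct (prog2 k δ) M) = IsReductModel δ M :=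
    funext fun _ => propext isModel_reduct_prog2_iff
  rw [isAnswerSet, progAtoms_prog2 hk, isMinimalModel_iff_minimal, hmodel,
    and_iff_right (Set.subset_univ M)]

/-- The candidate answer set of an assignment `α` to `X`: the atoms encoding `α`, together with
all atoms that the saturation rules derive from `w`. -/
def saturatedSet (m k : ℕ) (α : Fin n → Bool) : Set (Atom2 n m k) :=
  {a | match a with
    | .x i => α i = true
    | .v i => α i = false
    | .y _ | .yj _ _ | .w => True}

/-- The atoms that hold when `α` is chosen for `X`, the `j`-th guessing rule picks the variable
`f j`, and `w` is not derived. -/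
def guessSet (α : Fin n → Bool) (f : Fin k → Fin m) : Set (Atom2 n m k) :=
  {a | match a with
    | .x i => α i = true
    | .v i => α i = false
    | .y i => ∃ j, f j = i
    | .yj j i => f j = i
    | .w => False}

theorem guessSet_ssubset_saturatedSet (f : Fin k → Fin m) :
    guessSet α f ⊂ saturatedSet m k α := by
  refine ⟨fun a ha => ?_, fun h => h (a := .w) trivial⟩
  cases a <;> first | exact ha | trivial

theorem sigma2_mem_guessSet_iff {l : (Fin n ⊕ Fin m) × Bool} (f : Fin k → Fin m)
    (hl : ∀ i, l.1 = .inr i → l.2 = true) :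
    sigma2 k l ∈ guessSet α f ↔ Sum.elim α (rangeAssignment f) l.1 = l.2 := by
  obtain ⟨i | i, b⟩ := l
  · cases b <;> rfl
  · obtain rfl : b = true := hl i rfl
    exact rangeAssignment_eq_true.symm

theorem exists_sigma2_mem_guessSet_iff (f : Fin k → Fin m)
    (hpos : ∀ l d i, (δ l d).1 = .inr i → (δ l d).2 = true) :
    (∃ l, ∀ d, sigma2 k (δ l d) ∈ guessSet α f) ↔
      SatisfiesDNF δ (Sum.elim α (rangeAssignment f)) :=
  exists_congr fun l => forall_congr' fun d => sigma2_mem_guessSet_iff f (hpos l d)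

theorem isReductModel_guessSet (f : Fin k ↪ Fin m)
    (hpos : ∀ l d i, (δ l d).1 = .inr i → (δ l d).2 = true)
    (hunsat : ¬ SatisfiesDNF δ (Sum.elim α (rangeAssignment f))) :
    IsReductModel δ (saturatedSet m k α) (guessSet α f) where
  x_mem i := by simp [saturatedSet, guessSet]
  v_mem i := by simp [saturatedSet, guessSet]
  exists_yj_mem j := ⟨f j, rfl⟩
  y_mem i j hj := ⟨j, hj⟩
  yj_mem i j hw := hw.elim
  w_mem_of_collision i j j' hne hj hj' := hne (f.injective (hj.trans hj'.symm))
  w_mem_of_term l hl := hunsat <| (exists_sigma2_mem_guessSet_iff f hpos).1 ⟨l, hl⟩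
  w_mem_of_notMem hw := hw trivial

theorem isReductModel_saturatedSet (hm : 0 < m) (hx : ∀ i, .v i ∉ M → α i = true)
    (hv : ∀ i, .x i ∉ M → α i = false) : IsReductModel δ M (saturatedSet m k α) where
  x_mem := hx
  v_mem := hv
  exists_yj_mem _ := ⟨⟨0, hm⟩, trivial⟩
  y_mem _ _ _ := trivial
  yj_mem _ _ _ := trivial
  w_mem_of_collision _ _ _ _ _ _ := trivial
  w_mem_of_term _ _ := trivial
  w_mem_of_notMem _ := trivial

theorem IsReductModel.saturatedSet_subset (hN : IsReductModel δ M N) (hk : 0 < k)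
    (hw : .w ∈ N) (hx : ∀ i, α i = true → .x i ∈ N) (hv : ∀ i, α i = false → .v i ∈ N) :
    saturatedSet m k α ⊆ N := by
  intro a ha
  cases a with
  | x i => exact hx i ha
  | v i => exact hv i ha
  | y i => exact hN.y_mem i ⟨0, hk⟩ (hN.yj_mem _ _ hw)
  | yj j i => exact hN.yj_mem _ _ hw
  | w => exact hw

theorem IsReductModel.x_mem_of_eq_true (hN : IsReductModel δ (saturatedSet m k α) N) {i : Fin n}
    (hi : α i = true) : .x i ∈ N :=
  hN.x_mem i (by simp [saturatedSet, hi])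

theorem IsReductModel.v_mem_of_eq_false (hN : IsReductModel δ (saturatedSet m k α) N) {i : Fin n}
    (hi : α i = false) : .v i ∈ N :=
  hN.v_mem i (by simp [saturatedSet, hi])

theorem IsReductModel.exists_guessSet_subset (hN : IsReductModel δ (saturatedSet m k α) N)
    (hw : .w ∉ N) : ∃ f : Fin k ↪ Fin m, guessSet α f ⊆ N := by
  choose f hf using hN.exists_yj_mem
  have hinj : Function.Injective f := fun j j' hjj' => by
    by_contra hne
    exact hw (hN.w_mem_of_collision _ j j' hne (hf j) (hjj' ▸ hf j'))
  refine ⟨⟨f, hinj⟩, fun a ha => ?_⟩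
  cases a with
  | x i => exact hN.x_mem_of_eq_true ha
  | v i => exact hN.v_mem_of_eq_false ha
  | y i =>
    obtain ⟨j, rfl⟩ := ha
    exact hN.y_mem _ j (hf j)
  | yj j i =>
    obtain rfl : f j = i := ha
    exact hf j
  | w => exact ha.elim

theorem isAnswerSet_saturatedSet_iff (hk : 0 < k) (hm : 0 < m)
    (hpos : ∀ l d i, (δ l d).1 = .inr i → (δ l d).2 = true) :
    isAnswerSet (prog2 k δ) (saturatedSet m k α) ↔
      ∀ f : Fin k ↪ Fin m, SatisfiesDNF δ (Sum.elim α (rangeAssignment f)) := by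
  rw [isAnswerSet_prog2_iff hk]
  constructor
  · intro hmin f
    by_contra hunsat
    exact hmin.not_prop_of_lt (guessSet_ssubset_saturatedSet f)
      (isReductModel_guessSet f hpos hunsat)
  · intro hsat
    refine ⟨isReductModel_saturatedSet hm (by simp [saturatedSet]) (by simp [saturatedSet]),
      fun N hN _ => ?_⟩
    have hw : .w ∈ N := by
      by_contra hw
      obtain ⟨f, hf⟩ := hN.exists_guessSet_subset hw
      obtain ⟨l, hl⟩ := (exists_sigma2_mem_guessSet_iff f hpos).2 (hsat f)
      exact hw (hN.w_mem_of_term l fun d => hf (hl d))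
    exact hN.saturatedSet_subset hk hw (fun _ => hN.x_mem_of_eq_true)
      fun _ => hN.v_mem_of_eq_false

theorem exists_eq_saturatedSet_of_isAnswerSet (hk : 0 < k) (hm : 0 < m)
    (hM : isAnswerSet (prog2 k δ) M) : ∃ α, M = saturatedSet m k α := by
  classical
  rw [isAnswerSet_prog2_iff hk] at hM
  have hw : .w ∈ M := by_contra fun hw => hw (hM.prop.w_mem_of_notMem hw)
  refine ⟨fun i => decide (.x i ∈ M), hM.eq_of_superset ?_ ?_⟩
  · exact isReductModel_saturatedSet hm (fun i hi => decide_eq_true (hM.prop.x_mem i hi))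
      fun _ => decide_eq_false
  · exact hM.prop.saturatedSet_subset hk hw (fun _ => of_decide_eq_true)
      fun i hi => hM.prop.v_mem i (of_decide_eq_false hi)

end Reduction

/-- Correctness of the reduction from ∃*∀ᵏ-WSat(3DNF) (for formulas whose universal
variables occur only positively) to ASP-consistency parameterized by the number of
disjunctive rules: the disjunctive rules of the constructed program `P` are exactly the
`k` guessing rules `(y^j_1 ∨ … ∨ y^j_m ←)`, and there is an assignment `α` to `X` such
that every weight-`k` assignment `β` to `Y` makes `α ∪ β` satisfy `ψ` iff `P` has an
answer set. -/
theorem statement2 {n m k u : ℕ} (hk : 1 ≤ k) (hm : 2 ≤ m)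
    (δ : Fin u → Fin 3 → (Fin n ⊕ Fin m) × Bool)
    (hpos : ∀ (l : Fin u) (d : Fin 3) (i : Fin m),
      (δ l d).1 = Sum.inr i → (δ l d).2 = true) :
    ({r : Rule (Atom2 n m k) | r ∈ prog2 k δ ∧ r.isDisjunctive}
        = Set.range (guessRule2 n m (k := k))) ∧
    Function.Injective (guessRule2 n m (k := k)) ∧
    ((∃ α : Fin n → Bool,
        ∀ β : Fin m → Bool, weight β = k →
          ∃ l : Fin u, ∀ d : Fin 3, Sum.elim α β (δ l d).1 = (δ l d).2) ↔
      ∃ M : Set (Atom2 n m k), isAnswerSet (prog2 k δ) M) := by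
  have hm_pos : 0 < m := by omega
  refine ⟨setOf_isDisjunctive_prog2 hm δ, guessRule2_injective hm_pos, ?_⟩
  calc (∃ α : Fin n → Bool, ∀ β : Fin m → Bool, weight β = k → SatisfiesDNF δ (Sum.elim α β))
    _ ↔ ∃ α, isAnswerSet (prog2 k δ) (saturatedSet m k α) :=
      exists_congr fun α =>
        forall_weight_eq_iff.trans (isAnswerSet_saturatedSet_iff hk hm_pos hpos).symm
    _ ↔ ∃ M, isAnswerSet (prog2 k δ) M := by
      refine ⟨fun ⟨α, hα⟩ => ⟨_, hα⟩, fun ⟨M, hM⟩ => ?_⟩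
      obtain ⟨α, rfl⟩ := exists_eq_saturatedSet_of_isAnswerSet hk hm_pos hM
      exact ⟨α, hM⟩
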